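/- Let η > 0, κ ∈ ℝ^{n×n} with κ_ij > 0, r, c ∈ Δ^n, U ∈ ℝ^{d×k}, and consider the Sinkhorn iterates α^{(ℓ)}, β^{(ℓ)}, π^{(ℓ)} defined by: ζ^{(ℓ)} = ζ_η((α^{(ℓ)}, β^{(ℓ)}, U), κ), α^{(ℓ+1)} = α^{(ℓ)} − η log r + η log(ζ^{(ℓ)}1); ζ^{(ℓ+1/2)} = ζ_η((α^{(ℓ+1)}, β^{(ℓ)}, U), κ), β^{(ℓ+1)} = β^{(ℓ)} − η log c + η log((ζ^{(ℓ+1/2)})^T 1); π^{(ℓ)} = ζ^{(ℓ)}/‖ζ^{(ℓ)}‖₁. Suppose (α*, β*) is a global minimizer of (α,β) ↦ L_η((α,β,U),κ), and R > 0 satisfies ‖α^{(ℓ)}‖_var ≤ R for all ℓ ≥ 1 and ‖α*‖_var ≤ R. Then for every ℓ ≥ 0, ‖π^{(ℓ+1)}1 − r‖₁ ≤ (2R/η)/(ℓ + √2 − 1). Consequently, for any θ > 0, the condition ‖π^{(ℓ+1)}1 − r‖₁ ≤ θ is reached after at most ⌈2R/(ηθ) + 2 − √2⌉ Sinkhorn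 iterations. -/

import Mathlib

open scoped BigOperators
open Matrix

noncomputable section

namespace PRWPaper

/-- Squared Euclidean norm of a vector in `ℝ^d`. -/
def sqnorm {d : ℕ} (v : Fin d → ℝ) : ℝ := ∑ l, (v l) ^ 2

/-- `‖Uᵀ w‖²  = ⟨w wᵀ, U Uᵀ⟩` for `U ∈ ℝ^{d×k}`, `w ∈ ℝ^d`. -/
def projSq {d k : ℕ} (U : Matrix (Fin d) (Fin k) ℝ) (w : Fin d → ℝ) : ℝ :=
  ∑ m, (∑ l, U l m * w l) ^ 2

/-- `C_ij = ‖x_i - y_j‖²`. -/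
def costC {n d : ℕ} (x y : Fin n → Fin d → ℝ) (i j : Fin n) : ℝ :=
  sqnorm (fun l => x i l - y j l)

/-- `[C(U)]_ij = ‖Uᵀ (x_i - y_j)‖² = ⟨M_ij, U Uᵀ⟩`. -/
def costCU {n d k : ℕ} (x y : Fin n → Fin d → ℝ) (U : Matrix (Fin d) (Fin k) ℝ)
    (i j : Fin n) : ℝ :=
  projSq U (fun l => x i l - y j l)

/-- `‖C‖_∞ = max_{i,j} |C_ij|`. -/
def CInf {n d : ℕ} (x y : Fin n → Fin d → ℝ) : ℝ :=
  ⨆ p : Fin n × Fin n, |costC x y p.1 p.2|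

/-- `φ_ij(α, β, U) = α_i + β_j + ⟨M_ij, U Uᵀ⟩`. -/
def phi {n d k : ℕ} (x y : Fin n → Fin d → ℝ) (α β : Fin n → ℝ)
    (U : Matrix (Fin d) (Fin k) ℝ) (i j : Fin n) : ℝ :=
  α i + β j + costCU x y U i j

/-- `min_{i,j} φ_ij(α, β, U)`. -/
def phiMin {n d k : ℕ} (x y : Fin n → Fin d → ℝ) (α β : Fin n → ℝ)
    (U : Matrix (Fin d) (Fin k) ℝ) : ℝ :=
  ⨅ p : Fin n × Fin n, phi x y α β U p.1 p.2

/-- Membership in the (relatively open) simplex `Δ^n`. -/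
def inSimplex {n : ℕ} (r : Fin n → ℝ) : Prop :=
  (∑ i, r i) = 1 ∧ ∀ i, 0 < r i

/-- Membership in the transportation polytope `Π(r, c)`. -/
def inPlans {n : ℕ} (r c : Fin n → ℝ) (π : Matrix (Fin n) (Fin n) ℝ) : Prop :=
  (∀ i, ∑ j, π i j = r i) ∧ (∀ j, ∑ i, π i j = c j) ∧ ∀ i j, 0 ≤ π i j

/-- `ℓ₁` norm of a matrix. -/
def l1norm {n : ℕ} (A : Matrix (Fin n) (Fin n) ℝ) : ℝ := ∑ i, ∑ j, |A i j|

/-- `ζ_η(x, κ)_ij = κ_ij exp(-φ_ij(x)/η)`. -/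
def zeta {n d k : ℕ} (η : ℝ) (κ : Matrix (Fin n) (Fin n) ℝ) (x y : Fin n → Fin d → ℝ)
    (α β : Fin n → ℝ) (U : Matrix (Fin d) (Fin k) ℝ) : Matrix (Fin n) (Fin n) ℝ :=
  fun i j => κ i j * Real.exp (-(phi x y α β U i j) / η)

/-- `L_η((α,β,U), κ) = rᵀα + cᵀβ + η log ‖ζ_η((α,β,U),κ)‖₁`. -/
def Lfun {n d k : ℕ} (η : ℝ) (κ : Matrix (Fin n) (Fin n) ℝ) (r c : Fin n → ℝ)
    (x y : Fin n → Fin d → ℝ) (α β : Fin n → ℝ) (U : Matrix (Fin d) (Fin k) ℝ) : ℝ :=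
  (∑ i, r i * α i) + (∑ j, c j * β j) + η * Real.log (l1norm (zeta η κ x y α β U))

/-- `π_η(x, κ) = ζ_η(x,κ)/‖ζ_η(x,κ)‖₁`. -/
def piEta {n d k : ℕ} (η : ℝ) (κ : Matrix (Fin n) (Fin n) ℝ) (x y : Fin n → Fin d → ℝ)
    (α β : Fin n → ℝ) (U : Matrix (Fin d) (Fin k) ℝ) : Matrix (Fin n) (Fin n) ℝ :=
  fun i j => zeta η κ x y α β U i j / l1norm (zeta η κ x y α β U)

/-- Entropy `H(π) = -Σ_ij π_ij log π_ij` (with the convention `0 log 0 = 0`,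
which holds since `Real.log 0 = 0`). -/
def entropy {n : ℕ} (π : Matrix (Fin n) (Fin n) ℝ) : ℝ :=
  -∑ i, ∑ j, π i j * Real.log (π i j)

/-- `h(π, U) = ⟨C(U) - η log κ, π⟩ - η H(π)`. -/
def hObj {n d k : ℕ} (η : ℝ) (κ : Matrix (Fin n) (Fin n) ℝ) (x y : Fin n → Fin d → ℝ)
    (U : Matrix (Fin d) (Fin k) ℝ) (π : Matrix (Fin n) (Fin n) ℝ) : ℝ :=
  (∑ i, ∑ j, (costCU x y U i j - η * Real.log (κ i j)) * π i j) - η * entropy π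

/-- `‖π 1 - r‖₁`, the row-sum feasibility residual. -/
def rowRes {n : ℕ} (r : Fin n → ℝ) (π : Matrix (Fin n) (Fin n) ℝ) : ℝ :=
  ∑ i, |(∑ j, π i j) - r i|

/-- `‖πᵀ 1 - c‖₁`, the column-sum feasibility residual. -/
def colRes {n : ℕ} (c : Fin n → ℝ) (π : Matrix (Fin n) (Fin n) ℝ) : ℝ :=
  ∑ j, |(∑ i, π i j) - c j|

/-- Variation seminorm `‖v‖_var = max_i v_i - min_i v_i` of a vector. -/
def varVec {n : ℕ} (v : Fin n → ℝ) : ℝ := (⨆ i, v i) - (⨅ i, v i)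

/-- `‖log κ‖_var = max_{ij} log κ_ij - min_{ij} log κ_ij`. -/
def varLog {n : ℕ} (κ : Matrix (Fin n) (Fin n) ℝ) : ℝ :=
  (⨆ p : Fin n × Fin n, Real.log (κ p.1 p.2)) - (⨅ p : Fin n × Fin n, Real.log (κ p.1 p.2))

/-- `‖log κ‖_∞ = max_{ij} |log κ_ij|`. -/
def logInf {n : ℕ} (κ : Matrix (Fin n) (Fin n) ℝ) : ℝ :=
  ⨆ p : Fin n × Fin n, |Real.log (κ p.1 p.2)|

/-- Frobenius norm of a matrix. -/
def frobNorm {d k : ℕ} (A : Matrix (Fin d) (Fin k) ℝ) : ℝ :=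
  Real.sqrt (∑ l, ∑ m, (A l m) ^ 2)

/-- `V_π = Σ_ij π_ij M_ij` with `M_ij = (x_i - y_j)(x_i - y_j)ᵀ`. -/
def Vmat {n d : ℕ} (x y : Fin n → Fin d → ℝ) (π : Matrix (Fin n) (Fin n) ℝ) :
    Matrix (Fin d) (Fin d) ℝ :=
  fun l l' => ∑ i, ∑ j, π i j * ((x i l - y j l) * (x i l' - y j l'))

/-- Projection onto the tangent space of the Stiefel manifold at `U`:
`Proj_{T_U S}(A) = A - U (UᵀA + AᵀU)/2`. -/
def projTan {d k : ℕ} (U A : Matrix (Fin d) (Fin k) ℝ) : Matrix (Fin d) (Fin k) ℝ :=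
  A - (1 / 2 : ℝ) • (U * (Uᵀ * A + Aᵀ * U))

/-- Transport plan `(u_i A_ij v_j)_{ij}` normalized to total mass one. -/
def sinkMat {n : ℕ} (A : Matrix (Fin n) (Fin n) ℝ) (u v : Fin n → ℝ) :
    Matrix (Fin n) (Fin n) ℝ :=
  fun i j => u i * A i j * v j / (∑ i', ∑ j', u i' * A i' j' * v j')

/-!
A Sinkhorn step rescales the rows (or the columns) of the current plan so that its marginal becomes
exact, and it lowers the dual value `⟨r, α⟩ + ⟨c, β⟩` by `η` times the relative entropy between the
target and the current marginal. Pinsker's inequality bounds this decrease below by `η / 2` times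
the square of the residual, and rescaling never increases the residual, so a full iteration gains
`η / 2 * (e ℓ ^ 2 + e (ℓ + 1) ^ 2)` for the antitone sequence `e` of row residuals. Conversely,
`1 + t ≤ exp t` bounds every later decrease of the dual value by `R * e ℓ`; the gap to the infimum
of the dual values along the iteration therefore decays like `1 / ℓ`, a recursion started by
`η * e 0 ≤ R`, which follows from adding Pinsker's inequality in both orders. Telescoping the gain
over the second half of the first `ℓ` iterations, where each term is at least `e ℓ ^ 2`, against the
gap already reached at the first half gives `e ℓ = O(1 / ℓ)`.

Rows and columns are exchanged by transposing the kernel and shifting `α` by one index, so only row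
updates are analysed.
-/

section Pinsker

open InformationTheory

lemma rational_le_log {t : ℝ} (ht : 0 < t) :
    (t - 1) * (5 * t + 1) / (2 * t * (t + 2)) ≤ Real.log t := by
  let f : ℝ → ℝ := fun s => Real.log s - (s - 1) * (5 * s + 1) / (2 * s * (s + 2))
  have hderiv : ∀ s : ℝ, 0 < s → HasDerivAt f ((s - 1) ^ 3 / (s ^ 2 * (s + 2) ^ 2)) s := by
    intro s hs
    have hnum : HasDerivAt (fun s : ℝ => (s - 1) * (5 * s + 1)) (10 * s - 4) s := by
      convert! ((hasDerivAt_id s).sub_const 1).mul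
        (((hasDerivAt_id s).const_mul 5).add_const 1) using 1
      simp only [id]; ring
    have hden : HasDerivAt (fun s : ℝ => 2 * s * (s + 2)) (4 * s + 4) s := by
      convert! ((hasDerivAt_id s).const_mul 2).mul ((hasDerivAt_id s).add_const 2) using 1
      simp only [id]; ring
    convert! (Real.hasDerivAt_log hs.ne').sub (hnum.div hden (by positivity)) using 1
    field_simp
    ring
  have hmin : IsMinOn f (Set.Ioi 0) 1 := by
    refine isMinOn_Ioi_of_deriv (hderiv 1 one_pos).continuousAt
      (fun s hs => (hderiv s hs.1).differentiableAt.differentiableWithinAt)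
      (fun s hs => (hderiv s (one_pos.trans hs)).differentiableAt.differentiableWithinAt)
      (fun s hs => ?_) (fun s hs => ?_)
    · rw [(hderiv s hs.1).deriv]
      exact div_nonpos_of_nonpos_of_nonneg
        (Odd.pow_nonpos (by decide) (sub_nonpos.2 hs.2.le)) (by positivity)
    · rw [(hderiv s (one_pos.trans hs)).deriv]
      exact div_nonneg (pow_nonneg (sub_nonneg.2 (Set.mem_Ioi.1 hs).le) 3) (by positivity)
  have h : f 1 ≤ f t := hmin ht
  simpa [f] using h

lemma three_halves_mul_sq_div_le_klFun {t : ℝ} (ht : 0 ≤ t) :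
    3 / 2 * ((t - 1) ^ 2 / (t + 2)) ≤ klFun t := by
  rcases ht.eq_or_lt with rfl | ht
  · norm_num [klFun_zero]
  · have h := mul_le_mul_of_nonneg_left (rational_le_log ht) ht.le
    have hsplit : t * ((t - 1) * (5 * t + 1) / (2 * t * (t + 2)))
        = 3 / 2 * ((t - 1) ^ 2 / (t + 2)) + t - 1 := by
      field_simp
      ring
    rw [klFun_apply]
    linarith

variable {ι : Type*} [Fintype ι]

/-- The relative entropy (Kullback–Leibler divergence) `∑ i, r i * log (r i / p i)` of two
finitely supported distributions, as a real number. The quotient is written as a difference of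
logarithms, which is how the increments of the Sinkhorn iterates appear. -/
def relEntropy (r p : ι → ℝ) : ℝ := ∑ i, r i * (Real.log (r i) - Real.log (p i))

lemma relEntropy_eq_sum_klFun {r p : ι → ℝ} (hp : ∀ i, 0 < p i) (hrp : ∑ i, r i = ∑ i, p i) :
    relEntropy r p = ∑ i, p i * klFun (r i / p i) := by
  have hterm (i : ι) : p i * klFun (r i / p i)
      = r i * (Real.log (r i) - Real.log (p i)) + (p i - r i) := by
    have hpi := (hp i).ne'
    rcases eq_or_ne (r i) 0 with hri | hri
    · simp [hri, klFun_zero]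
    · rw [klFun_apply, Real.log_div hri hpi]
      field_simp
      ring
  simp only [relEntropy, hterm, Finset.sum_add_distrib, Finset.sum_sub_distrib, hrp, sub_self,
    add_zero]

/-- Cauchy–Schwarz with the weights `r i + 2 * p i`, of total mass `3`, reduces Pinsker's inequality
to a pointwise lower bound on `klFun`. -/
lemma sq_sum_abs_sub_le_two_mul_relEntropy {r p : ι → ℝ} (hr : ∀ i, 0 ≤ r i) (hp : ∀ i, 0 < p i)
    (hr_sum : ∑ i, r i = 1) (hp_sum : ∑ i, p i = 1) :
    (∑ i, |r i - p i|) ^ 2 ≤ 2 * relEntropy r p := by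
  have hpos (i : ι) : 0 < r i + 2 * p i := by linarith [hr i, hp i]
  have hterm (i : ι) : 3 / 2 * (|r i - p i| ^ 2 / (r i + 2 * p i)) ≤ p i * klFun (r i / p i) := by
    have hpi := hp i
    calc 3 / 2 * (|r i - p i| ^ 2 / (r i + 2 * p i))
        = p i * (3 / 2 * ((r i / p i - 1) ^ 2 / (r i / p i + 2))) := by
          have := hpos i
          have : r i / p i + 2 = (r i + 2 * p i) / p i := by field_simp
          rw [sq_abs, this]
          field_simp
      _ ≤ p i * klFun (r i / p i) := mul_le_mul_of_nonneg_left
          (three_halves_mul_sq_div_le_klFun (div_nonneg (hr i) hpi.le)) hpi.le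
  have hweight : ∑ i, (r i + 2 * p i) = 3 := by
    rw [Finset.sum_add_distrib, ← Finset.mul_sum, hr_sum, hp_sum]
    norm_num
  calc (∑ i, |r i - p i|) ^ 2
      = 3 * ((∑ i, |r i - p i|) ^ 2 / ∑ i, (r i + 2 * p i)) := by rw [hweight]; ring
    _ ≤ 3 * ∑ i, |r i - p i| ^ 2 / (r i + 2 * p i) := by
        gcongr
        exact Finset.sq_sum_div_le_sum_sq_div _ _ fun i _ => hpos i
    _ = 2 * ∑ i, 3 / 2 * (|r i - p i| ^ 2 / (r i + 2 * p i)) := by rw [← Finset.mul_sum]; ring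
    _ ≤ 2 * relEntropy r p := by
        rw [relEntropy_eq_sum_klFun hp (hr_sum.trans hp_sum.symm)]
        exact mul_le_mul_of_nonneg_left (Finset.sum_le_sum fun i _ => hterm i) zero_le_two

end Pinsker

section Rates

lemma succ_mul_le_one_of_mul_succ_le_sub {δ : ℕ → ℝ} (hδ : ∀ k, 0 ≤ δ k) (hδ0 : δ 0 ≤ 1)
    (hdec : ∀ k, δ k * δ (k + 1) ≤ δ k - δ (k + 1)) (k : ℕ) : (k + 1) * δ k ≤ 1 := by
  induction k with
  | zero => simpa using hδ0
  | succ k ih =>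
    have hmul : (k + 2) * δ (k + 1) * (1 + δ k) ≤ 1 * (1 + δ k) := by
      calc (k + 2) * δ (k + 1) * (1 + δ k) = (k + 2) * (δ (k + 1) + δ k * δ (k + 1)) := by ring
        _ ≤ (k + 2) * δ k := by gcongr; linarith [hdec k]
        _ ≤ 1 * (1 + δ k) := by linarith
    have := le_of_mul_le_mul_right hmul (by linarith [hδ k])
    push_cast
    linarith

variable {δ e : ℕ → ℝ}

lemma add_half_mul_sq_le_of_sq_decrease (hδ : ∀ k, 0 ≤ δ k) (he : ∀ k, 0 ≤ e k)
    (he_anti : Antitone e) (hdec : ∀ k, (e k ^ 2 + e (k + 1) ^ 2) / 2 ≤ δ k - δ (k + 1))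
    (m j : ℕ) : (j + 1 / 2) * e (m + j) ^ 2 ≤ δ m := by
  induction j generalizing m with
  | zero =>
    have := hdec m
    have := hδ (m + 1)
    have := sq_nonneg (e (m + 1))
    simp only [add_zero, CharP.cast_eq_zero]
    linarith
  | succ j ih =>
    have htail := ih (m + 1)
    rw [show m + 1 + j = m + (j + 1) by ring] at htail
    have hm := pow_le_pow_left₀ (he _) (he_anti (by lia : m ≤ m + (j + 1))) 2
    have hm' := pow_le_pow_left₀ (he _) (he_anti (by lia : m + 1 ≤ m + (j + 1))) 2
    have := hdec m
    push_cast
    linarith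

lemma mul_succ_le_two_of_sq_decrease (hδ : ∀ k, 0 ≤ δ k) (hδe : ∀ k, δ k ≤ e k)
    (he_anti : Antitone e) (he0 : e 0 ≤ 1)
    (hdec : ∀ k, (e k ^ 2 + e (k + 1) ^ 2) / 2 ≤ δ k - δ (k + 1)) (k : ℕ) :
    e k * (k + 1) ≤ 2 := by
  have he (k : ℕ) : 0 ≤ e k := (hδ k).trans (hδe k)
  have hgap : ∀ m : ℕ, (m + 1) * δ m ≤ 1 := by
    refine succ_mul_le_one_of_mul_succ_le_sub hδ ((hδe 0).trans he0) fun m => ?_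
    have hm := pow_le_pow_left₀ (hδ m) (hδe m) 2
    have hm' := pow_le_pow_left₀ (hδ (m + 1)) (hδe (m + 1)) 2
    linarith [two_mul_le_add_sq (δ m) (δ (m + 1)), hdec m]
  have hsplit (m j : ℕ) : (m + 1) * (j + 1 / 2) * e (m + j) ^ 2 ≤ 1 := by
    rw [mul_assoc]
    exact (mul_le_mul_of_nonneg_left (add_half_mul_sq_le_of_sq_decrease hδ he he_anti hdec m j)
      (by positivity)).trans (hgap m)
  refine le_of_sq_le_sq ?_ zero_le_two
  obtain ⟨m, rfl | rfl⟩ := Nat.even_or_odd' k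
  · have h := hsplit m m
    rw [← two_mul] at h
    push_cast
    nlinarith [mul_nonneg m.cast_nonneg (sq_nonneg (e (2 * m))), sq_nonneg (e (2 * m))]
  · have h := hsplit m (m + 1)
    rw [show m + (m + 1) = 2 * m + 1 by ring] at h
    push_cast at h ⊢
    nlinarith [mul_nonneg m.cast_nonneg (sq_nonneg (e (2 * m + 1))), sq_nonneg (e (2 * m + 1))]

lemma le_div_succ_of_sq_decrease {D : ℕ → ℝ} {η R : ℝ} (hη : 0 < η) (hR : 0 < R)
    (he_anti : Antitone e) (he0 : η * e 0 ≤ R) (hgap : ∀ k m, D k - D m ≤ R * e k)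
    (hdec : ∀ k, η * ((e k ^ 2 + e (k + 1) ^ 2) / 2) ≤ D k - D (k + 1)) (k : ℕ) :
    e k ≤ 2 * R / η / (k + 1) := by
  have hbdd : BddBelow (Set.range D) :=
    ⟨D 0 - R * e 0, by rintro _ ⟨m, rfl⟩; linarith [hgap 0 m]⟩
  have hinf (k : ℕ) : D k - ⨅ m, D m ≤ R * e k := by
    have : D k - R * e k ≤ ⨅ m, D m := le_ciInf fun m => by linarith [hgap k m]
    linarith
  have hscale : 0 ≤ η / R ^ 2 := by positivity
  have hgap' (k : ℕ) : η / R ^ 2 * (D k - ⨅ m, D m) ≤ η / R * e k :=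
    calc η / R ^ 2 * (D k - ⨅ m, D m) ≤ η / R ^ 2 * (R * e k) :=
          mul_le_mul_of_nonneg_left (hinf k) hscale
      _ = η / R * e k := by field_simp
  have hdec' (k : ℕ) : ((η / R * e k) ^ 2 + (η / R * e (k + 1)) ^ 2) / 2
      ≤ η / R ^ 2 * (D k - ⨅ m, D m) - η / R ^ 2 * (D (k + 1) - ⨅ m, D m) :=
    calc ((η / R * e k) ^ 2 + (η / R * e (k + 1)) ^ 2) / 2
        = η / R ^ 2 * (η * ((e k ^ 2 + e (k + 1) ^ 2) / 2)) := by ring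
      _ ≤ η / R ^ 2 * (D k - D (k + 1)) := mul_le_mul_of_nonneg_left (hdec k) hscale
      _ = η / R ^ 2 * (D k - ⨅ m, D m) - η / R ^ 2 * (D (k + 1) - ⨅ m, D m) := by ring
  have h := mul_succ_le_two_of_sq_decrease
    (δ := fun k => η / R ^ 2 * (D k - ⨅ m, D m)) (e := fun k => η / R * e k)
    (fun k => mul_nonneg hscale (sub_nonneg.2 (ciInf_le hbdd k)))
    hgap' (he_anti.const_mul (by positivity))
    (by rwa [div_mul_eq_mul_div, div_le_one hR]) hdec' k
  rw [le_div_iff₀ (by positivity), le_div_iff₀ hη]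
  calc e k * (k + 1) * η = R * (η / R * e k * (k + 1)) := by field_simp
    _ ≤ R * 2 := by gcongr
    _ = 2 * R := mul_comm _ _

/-- Passes from `k + 1` to `k + √2 - 1`, the constant of the paper, which is smaller. -/
lemma rate_and_complexity_of_le_div_succ {A : ℝ} (hA : 0 ≤ A)
    (he : ∀ k : ℕ, e k ≤ A / (k + 1)) :
    (∀ k : ℕ, e k ≤ A / (k + Real.sqrt 2 - 1)) ∧
      ∀ θ : ℝ, 0 < θ → ∃ k : ℕ, k + 1 ≤ Nat.ceil (A / θ + 2 - Real.sqrt 2) ∧ e k ≤ θ := by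
  have one_lt_sqrt_two : 1 < Real.sqrt 2 := Real.lt_sqrt_of_sq_lt (by norm_num)
  have sqrt_two_lt_two : Real.sqrt 2 < 2 := (Real.sqrt_lt' two_pos).2 (by norm_num)
  have hrate (k : ℕ) : e k ≤ A / (k + Real.sqrt 2 - 1) := by
    have : (0 : ℝ) ≤ k := k.cast_nonneg
    refine (he k).trans (div_le_div_of_nonneg_left hA ?_ ?_) <;> linarith
  refine ⟨hrate, fun θ hθ => ?_⟩
  have hAθ : 0 ≤ A / θ := by positivity
  have hceil : 0 < Nat.ceil (A / θ + 2 - Real.sqrt 2) := Nat.ceil_pos.2 (by linarith)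
  obtain ⟨k, hk⟩ := Nat.exists_eq_succ_of_ne_zero hceil.ne'
  have hle : A / θ + 2 - Real.sqrt 2 ≤ k + 1 := by
    exact_mod_cast hk ▸ Nat.le_ceil (A / θ + 2 - Real.sqrt 2)
  refine ⟨k, hk.ge, (hrate k).trans ?_⟩
  rw [div_le_comm₀ (by linarith [k.cast_nonneg (α := ℝ)]) hθ]
  linarith

end Rates

lemma sum_mul_le_of_sum_eq_zero {ι : Type*} [Fintype ι] {w u : ι → ℝ} {R : ℝ}
    (hw : ∑ i, w i = 0) (hu : ∀ i i', u i - u i' ≤ 2 * R) : ∑ i, w i * u i ≤ R * ∑ i, |w i| := by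
  cases isEmpty_or_nonempty ι
  · simp
  obtain ⟨top, htop⟩ := Finite.exists_max u
  obtain ⟨bot, hbot⟩ := Finite.exists_min u
  set mid := (u top + u bot) / 2 with hmid
  have hdist (i : ι) : |u i - mid| ≤ R := by
    rw [abs_le]
    constructor <;> linarith [htop i, hbot i, hu top bot]
  calc ∑ i, w i * u i = ∑ i, w i * (u i - mid) := by
        simp only [mul_sub, Finset.sum_sub_distrib, ← Finset.sum_mul, hw, zero_mul, sub_zero]
    _ ≤ ∑ i, R * |w i| := by
        refine Finset.sum_le_sum fun i _ => (le_abs_self _).trans ?_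
        rw [abs_mul, mul_comm]
        exact mul_le_mul_of_nonneg_right (hdist i) (abs_nonneg _)
    _ = R * ∑ i, |w i| := (Finset.mul_sum _ _ _).symm

lemma sub_le_varVec {n : ℕ} (v : Fin n → ℝ) (i i' : Fin n) : v i - v i' ≤ varVec v :=
  sub_le_sub (le_ciSup (Set.finite_range v).bddAbove i) (ciInf_le (Set.finite_range v).bddBelow i')

lemma sum_abs_colSum_rescale_sub_le {ι ι' : Type*} [Fintype ι] [Fintype ι']
    {A : Matrix ι ι' ℝ} (hA : ∀ i j, 0 ≤ A i j) (hpos : ∀ i, 0 < ∑ j, A i j) (r : ι → ℝ) :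
    ∑ j, |∑ i, A i j * (r i / ∑ j', A i j') - ∑ i, A i j| ≤ ∑ i, |(∑ j, A i j) - r i| := by
  have hrescale (i : ι) (j : ι') : |A i j * (r i / ∑ j', A i j') - A i j|
      = A i j * (|(∑ j', A i j') - r i| / ∑ j', A i j') := by
    have hi := (hpos i).ne'
    rw [← mul_sub_one, abs_mul, abs_of_nonneg (hA i j), div_sub_one hi, abs_div,
      abs_of_pos (hpos i), abs_sub_comm]
  calc ∑ j, |∑ i, A i j * (r i / ∑ j', A i j') - ∑ i, A i j|
      ≤ ∑ j, ∑ i, A i j * (|(∑ j', A i j') - r i| / ∑ j', A i j') := by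
        refine Finset.sum_le_sum fun j _ => ?_
        simp only [← hrescale, ← Finset.sum_sub_distrib]
        exact Finset.abs_sum_le_sum_abs _ _
    _ = ∑ i, |(∑ j, A i j) - r i| := by
        rw [Finset.sum_comm]
        refine Finset.sum_congr rfl fun i _ => ?_
        rw [← Finset.sum_mul, mul_div_cancel₀ _ (hpos i).ne']

section Scaling

variable {ι ι' : Type*}

/-- The entropic transport plan with dual potentials `α` and `β` for the Gibbs kernel `K`: the
diagonal scaling `diag (exp (-α / η)) * K * diag (exp (-β / η))`, not normalized to mass one. -/
def scaledKernel (η : ℝ) (K : Matrix ι ι' ℝ) (α : ι → ℝ) (β : ι' → ℝ) : Matrix ι ι' ℝ :=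
  fun i j => K i j * Real.exp (-(α i + β j) / η)

variable {η : ℝ} {K : Matrix ι ι' ℝ} {r α α' : ι → ℝ} {c β β' : ι' → ℝ}

lemma scaledKernel_nonneg (hK : ∀ i j, 0 ≤ K i j) (i : ι) (j : ι') :
    0 ≤ scaledKernel η K α β i j :=
  mul_nonneg (hK i j) (Real.exp_nonneg _)

lemma scaledKernel_transpose (i : ι) (j : ι') :
    scaledKernel η Kᵀ β α j i = scaledKernel η K α β i j := by
  simp only [scaledKernel, Matrix.transpose_apply, add_comm]

lemma scaledKernel_eq_mul_exp (i : ι) (j : ι') :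
    scaledKernel η K α' β' i j
      = scaledKernel η K α β i j * Real.exp ((α i - α' i + (β j - β' j)) / η) := by
  rw [scaledKernel, scaledKernel, mul_assoc, ← Real.exp_add]
  ring_nf

section RowUpdate

variable [Fintype ι']

/-- One Sinkhorn half-step on the row potential. The half-step on the column potential is
`rowUpdate η Kᵀ c β α`. -/
def rowUpdate (η : ℝ) (K : Matrix ι ι' ℝ) (r α : ι → ℝ) (β : ι' → ℝ) : ι → ℝ :=
  fun i => α i - η * Real.log (r i) + η * Real.log (∑ j, scaledKernel η K α β i j)

lemma sub_rowUpdate (i : ι) : α i - rowUpdate η K r α β i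
    = η * (Real.log (r i) - Real.log (∑ j, scaledKernel η K α β i j)) := by
  rw [rowUpdate]
  ring

lemma sum_scaledKernel_pos (hK : ∀ i j, 0 ≤ K i j) {i : ι} (hi : ∃ j, 0 < K i j) :
    0 < ∑ j, scaledKernel η K α β i j := by
  obtain ⟨j, hj⟩ := hi
  exact Finset.sum_pos' (fun j _ => scaledKernel_nonneg hK i j)
    ⟨j, Finset.mem_univ j, mul_pos hj (Real.exp_pos _)⟩

lemma scaledKernel_rowUpdate (hη : η ≠ 0) {i : ι} (hr : 0 < r i)
    (hi : 0 < ∑ j, scaledKernel η K α β i j) (j : ι') :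
    scaledKernel η K (rowUpdate η K r α β) β i j
      = scaledKernel η K α β i j * (r i / ∑ j', scaledKernel η K α β i j') := by
  rw [scaledKernel_eq_mul_exp (α := α) (β := β), sub_self, add_zero, sub_rowUpdate,
    mul_div_cancel_left₀ _ hη, Real.exp_sub, Real.exp_log hr, Real.exp_log hi]

lemma sum_scaledKernel_rowUpdate (hη : η ≠ 0) {i : ι} (hr : 0 < r i)
    (hi : 0 < ∑ j, scaledKernel η K α β i j) :
    ∑ j, scaledKernel η K (rowUpdate η K r α β) β i j = r i := by
  simp only [scaledKernel_rowUpdate hη hr hi, ← Finset.sum_mul]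
  exact mul_div_cancel₀ _ hi.ne'

end RowUpdate

variable [Fintype ι] [Fintype ι']

/-- The `ℓ₁` distance of the row sums of the plan with potentials `α` and `β` from `r`. The column
residual is `rowResidual η Kᵀ c β α`. -/
def rowResidual (η : ℝ) (K : Matrix ι ι' ℝ) (r α : ι → ℝ) (β : ι' → ℝ) : ℝ :=
  ∑ i, |(∑ j, scaledKernel η K α β i j) - r i|

lemma rowResidual_nonneg : 0 ≤ rowResidual η K r α β :=
  Finset.sum_nonneg fun _ _ => abs_nonneg _

lemma rowResidual_transpose_rowUpdate_le (hη : η ≠ 0) (hK : ∀ i j, 0 ≤ K i j)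
    (hr : ∀ i, 0 < r i) (hrow : ∀ i, 0 < ∑ j, scaledKernel η K α β i j)
    (hcol : ∀ j, ∑ i, scaledKernel η K α β i j = c j) :
    rowResidual η Kᵀ c β (rowUpdate η K r α β) ≤ rowResidual η K r α β := by
  have h := sum_abs_colSum_rescale_sub_le (scaledKernel_nonneg (η := η) (α := α) (β := β) hK) hrow r
  simpa only [rowResidual, scaledKernel_transpose, scaledKernel_rowUpdate hη (hr _) (hrow _), hcol]
    using h

/-- The gradient inequality of the dual objective, with masses in place of their logarithms. -/
lemma sum_rowSum_mul_sub_add_sum_colSum_mul_sub_le (hη : 0 < η) (hK : ∀ i j, 0 ≤ K i j) :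
    ∑ i, (∑ j, scaledKernel η K α β i j) * (α i - α' i)
        + ∑ j, (∑ i, scaledKernel η K α β i j) * (β j - β' j)
      ≤ η * (∑ i, ∑ j, scaledKernel η K α' β' i j - ∑ i, ∑ j, scaledKernel η K α β i j) := by
  have hterm (i : ι) (j : ι') : scaledKernel η K α β i j * (α i - α' i + (β j - β' j))
      ≤ η * (scaledKernel η K α' β' i j - scaledKernel η K α β i j) := by
    set t := (α i - α' i + (β j - β' j)) / η with ht
    rw [scaledKernel_eq_mul_exp (α := α) (β := β) (α' := α'), ← ht,
      show α i - α' i + (β j - β' j) = η * t by rw [ht]; field_simp]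
    have hA : 0 ≤ η * scaledKernel η K α β i j := mul_nonneg hη.le (scaledKernel_nonneg hK i j)
    linarith [mul_le_mul_of_nonneg_left (Real.add_one_le_exp t) hA]
  calc _ = ∑ i, ∑ j, scaledKernel η K α β i j * (α i - α' i + (β j - β' j)) := by
        simp only [mul_add, Finset.sum_add_distrib, Finset.sum_mul]
        congr 1
        exact Finset.sum_comm
    _ ≤ ∑ i, ∑ j, η * (scaledKernel η K α' β' i j - scaledKernel η K α β i j) :=
        Finset.sum_le_sum fun i _ => Finset.sum_le_sum fun j _ => hterm i j
    _ = _ := by simp only [← Finset.mul_sum, Finset.sum_sub_distrib]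

/-- The dual objective `⟨r, α⟩ + ⟨c, β⟩ + η log ‖ζ‖₁` without its last term, which vanishes at plans
of mass one and thus along the Sinkhorn iteration. -/
def dualValue (r : ι → ℝ) (c : ι' → ℝ) (α : ι → ℝ) (β : ι' → ℝ) : ℝ :=
  ∑ i, r i * α i + ∑ j, c j * β j

/-- The potentials `α` and `β` are produced by the Sinkhorn iteration for the kernel `K` and the
marginals `r` and `c`. The data are part of the notion: `r` and `c` are positive probability
vectors, and `K` may have zero entries but no zero row or column, which keeps all the logarithms
in the updates at positive arguments. -/
structure IsSinkhornSequence (η : ℝ) (K : Matrix ι ι' ℝ) (r : ι → ℝ) (c : ι' → ℝ)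
    (α : ℕ → ι → ℝ) (β : ℕ → ι' → ℝ) : Prop where
  eta_pos : 0 < η
  kernel_nonneg : ∀ i j, 0 ≤ K i j
  exists_pos_in_row : ∀ i, ∃ j, 0 < K i j
  exists_pos_in_col : ∀ j, ∃ i, 0 < K i j
  rowMarginal_pos : ∀ i, 0 < r i
  rowMarginal_sum : ∑ i, r i = 1
  colMarginal_pos : ∀ j, 0 < c j
  colMarginal_sum : ∑ j, c j = 1
  row_step : ∀ ℓ, α (ℓ + 1) = rowUpdate η K r (α ℓ) (β ℓ)
  col_step : ∀ ℓ, β (ℓ + 1) = rowUpdate η Kᵀ c (β ℓ) (α (ℓ + 1))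

namespace IsSinkhornSequence

variable {α : ℕ → ι → ℝ} {β : ℕ → ι' → ℝ} {R : ℝ}

lemma swap (h : IsSinkhornSequence η K r c α β) :
    IsSinkhornSequence η Kᵀ c r β (fun ℓ => α (ℓ + 1)) where
  eta_pos := h.eta_pos
  kernel_nonneg j i := h.kernel_nonneg i j
  exists_pos_in_row := h.exists_pos_in_col
  exists_pos_in_col := h.exists_pos_in_row
  rowMarginal_pos := h.colMarginal_pos
  rowMarginal_sum := h.colMarginal_sum
  colMarginal_pos := h.rowMarginal_pos
  colMarginal_sum := h.rowMarginal_sum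
  row_step := h.col_step
  col_step ℓ := h.row_step (ℓ + 1)

lemma rowSum_pos (h : IsSinkhornSequence η K r c α β) (ℓ : ℕ) (i : ι) :
    0 < ∑ j, scaledKernel η K (α ℓ) (β ℓ) i j :=
  sum_scaledKernel_pos h.kernel_nonneg (h.exists_pos_in_row i)

lemma rowSum_half_step (h : IsSinkhornSequence η K r c α β) (ℓ : ℕ) (i : ι) :
    ∑ j, scaledKernel η K (α (ℓ + 1)) (β ℓ) i j = r i := by
  rw [h.row_step]
  exact sum_scaledKernel_rowUpdate h.eta_pos.ne' (h.rowMarginal_pos i) (h.rowSum_pos ℓ i)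

lemma colSum_succ (h : IsSinkhornSequence η K r c α β) (ℓ : ℕ) (j : ι') :
    ∑ i, scaledKernel η K (α (ℓ + 1)) (β (ℓ + 1)) i j = c j := by
  simpa only [scaledKernel_transpose] using h.swap.rowSum_half_step ℓ j

lemma mass_succ (h : IsSinkhornSequence η K r c α β) (ℓ : ℕ) :
    ∑ i, ∑ j, scaledKernel η K (α (ℓ + 1)) (β (ℓ + 1)) i j = 1 :=
  Finset.sum_comm.trans (by simp only [h.colSum_succ, h.colMarginal_sum])

lemma colResidual_half_step_le (h : IsSinkhornSequence η K r c α β) (ℓ : ℕ) :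
    rowResidual η Kᵀ c (β (ℓ + 1)) (α (ℓ + 2))
      ≤ rowResidual η K r (α (ℓ + 1)) (β (ℓ + 1)) := by
  rw [h.row_step (ℓ + 1)]
  exact rowResidual_transpose_rowUpdate_le h.eta_pos.ne' h.kernel_nonneg h.rowMarginal_pos
    (h.rowSum_pos _) (h.colSum_succ ℓ)

lemma rowResidual_le_colResidual_half_step (h : IsSinkhornSequence η K r c α β) (ℓ : ℕ) :
    rowResidual η K r (α (ℓ + 2)) (β (ℓ + 2))
      ≤ rowResidual η Kᵀ c (β (ℓ + 1)) (α (ℓ + 2)) :=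
  h.swap.colResidual_half_step_le ℓ

lemma antitone_rowResidual (h : IsSinkhornSequence η K r c α β) :
    Antitone fun ℓ => rowResidual η K r (α (ℓ + 1)) (β (ℓ + 1)) :=
  antitone_nat_of_succ_le fun ℓ =>
    (h.rowResidual_le_colResidual_half_step ℓ).trans (h.colResidual_half_step_le ℓ)

lemma sq_rowResidual_le_two_mul_relEntropy (h : IsSinkhornSequence η K r c α β) (ℓ : ℕ) :
    rowResidual η K r (α (ℓ + 1)) (β (ℓ + 1)) ^ 2
      ≤ 2 * relEntropy r fun i => ∑ j, scaledKernel η K (α (ℓ + 1)) (β (ℓ + 1)) i j := by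
  simp only [rowResidual, abs_sub_comm _ (r _)]
  exact sq_sum_abs_sub_le_two_mul_relEntropy (fun i => (h.rowMarginal_pos i).le)
    (h.rowSum_pos _) h.rowMarginal_sum (h.mass_succ ℓ)

lemma sum_mul_potential_decrease (h : IsSinkhornSequence η K r c α β) (ℓ : ℕ) :
    ∑ i, r i * α ℓ i - ∑ i, r i * α (ℓ + 1) i
      = η * relEntropy r fun i => ∑ j, scaledKernel η K (α ℓ) (β ℓ) i j := by
  simp only [← Finset.sum_sub_distrib, ← mul_sub, h.row_step ℓ, sub_rowUpdate, relEntropy,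
    Finset.mul_sum, mul_left_comm]

lemma half_mul_sq_rowResidual_le (h : IsSinkhornSequence η K r c α β) (ℓ : ℕ) :
    η / 2 * rowResidual η K r (α (ℓ + 1)) (β (ℓ + 1)) ^ 2
      ≤ ∑ i, r i * α (ℓ + 1) i - ∑ i, r i * α (ℓ + 2) i := by
  rw [h.sum_mul_potential_decrease]
  linarith [mul_le_mul_of_nonneg_left (h.sq_rowResidual_le_two_mul_relEntropy ℓ) h.eta_pos.le]

lemma dualValue_decrease (h : IsSinkhornSequence η K r c α β) (ℓ : ℕ) :
    η * ((rowResidual η K r (α (ℓ + 1)) (β (ℓ + 1)) ^ 2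
          + rowResidual η K r (α (ℓ + 2)) (β (ℓ + 2)) ^ 2) / 2)
      ≤ dualValue r c (α (ℓ + 1)) (β (ℓ + 1)) - dualValue r c (α (ℓ + 2)) (β (ℓ + 2)) := by
  have hrow := h.half_mul_sq_rowResidual_le ℓ
  have hcol := h.swap.half_mul_sq_rowResidual_le ℓ
  have hres := mul_le_mul_of_nonneg_left
    (pow_le_pow_left₀ rowResidual_nonneg (h.rowResidual_le_colResidual_half_step ℓ) 2)
    (half_pos h.eta_pos).le
  unfold dualValue
  linarith

lemma sum_marginal_sub_rowSum_mul_le (h : IsSinkhornSequence η K r c α β)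
    (hosc : ∀ ℓ i i', α (ℓ + 1) i - α (ℓ + 1) i' ≤ R) (ℓ m : ℕ) :
    ∑ i, (r i - ∑ j, scaledKernel η K (α (ℓ + 1)) (β (ℓ + 1)) i j) * (α (ℓ + 1) i - α (m + 1) i)
      ≤ R * rowResidual η K r (α (ℓ + 1)) (β (ℓ + 1)) := by
  simp only [rowResidual, abs_sub_comm _ (r _)]
  refine sum_mul_le_of_sum_eq_zero ?_ fun i i' => ?_
  · rw [Finset.sum_sub_distrib, h.rowMarginal_sum, h.mass_succ, sub_self]
  · linarith [hosc ℓ i i', hosc m i' i]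

lemma dualValue_sub_le (h : IsSinkhornSequence η K r c α β)
    (hosc : ∀ ℓ i i', α (ℓ + 1) i - α (ℓ + 1) i' ≤ R) (ℓ m : ℕ) :
    dualValue r c (α (ℓ + 1)) (β (ℓ + 1)) - dualValue r c (α (m + 1)) (β (m + 1))
      ≤ R * rowResidual η K r (α (ℓ + 1)) (β (ℓ + 1)) := by
  have hgrad := sum_rowSum_mul_sub_add_sum_colSum_mul_sub_le (α := α (ℓ + 1)) (α' := α (m + 1))
    (β := β (ℓ + 1)) (β' := β (m + 1)) h.eta_pos h.kernel_nonneg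
  have hosc' := h.sum_marginal_sub_rowSum_mul_le hosc ℓ m
  simp only [h.mass_succ, h.colSum_succ, sub_self, mul_zero] at hgrad
  simp only [sub_mul, mul_sub, Finset.sum_sub_distrib, dualValue] at hgrad hosc' ⊢
  linarith

lemma eta_mul_rowResidual_le (h : IsSinkhornSequence η K r c α β) (hR : 0 ≤ R)
    (hosc : ∀ ℓ i i', α (ℓ + 1) i - α (ℓ + 1) i' ≤ R) (ℓ : ℕ) :
    η * rowResidual η K r (α (ℓ + 1)) (β (ℓ + 1)) ≤ R := by
  set p : ι → ℝ := fun i => ∑ j, scaledKernel η K (α (ℓ + 1)) (β (ℓ + 1)) i j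
  set e := rowResidual η K r (α (ℓ + 1)) (β (ℓ + 1))
  have hrp : e ^ 2 ≤ 2 * relEntropy r p := h.sq_rowResidual_le_two_mul_relEntropy ℓ
  have hpr : e ^ 2 ≤ 2 * relEntropy p r :=
    sq_sum_abs_sub_le_two_mul_relEntropy (fun i => (h.rowSum_pos _ i).le) h.rowMarginal_pos
      (h.mass_succ ℓ) h.rowMarginal_sum
  have hsymm : ∑ i, (r i - p i) * (α (ℓ + 1) i - α (ℓ + 2) i)
      = η * (relEntropy r p + relEntropy p r) := by
    simp only [h.row_step (ℓ + 1), sub_rowUpdate, relEntropy, ← Finset.sum_add_distrib,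
      Finset.mul_sum]
    exact Finset.sum_congr rfl fun i _ => by ring
  have hmul : η * e * e ≤ R * e := by
    calc η * e * e = η * e ^ 2 := by ring
      _ ≤ η * (relEntropy r p + relEntropy p r) :=
          mul_le_mul_of_nonneg_left (by linarith) h.eta_pos.le
      _ ≤ R * e := hsymm ▸ h.sum_marginal_sub_rowSum_mul_le hosc ℓ (ℓ + 1)
  have he : 0 ≤ e := rowResidual_nonneg
  rcases he.eq_or_lt with hzero | hpos
  · rwa [← hzero, mul_zero]
  · exact le_of_mul_le_mul_right hmul hpos

end IsSinkhornSequence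

theorem statement13_general {R : ℝ} {α : ℕ → ι → ℝ} {β : ℕ → ι' → ℝ}
    (h : IsSinkhornSequence η K r c α β) (hR : 0 < R)
    (hosc : ∀ ℓ i i', α (ℓ + 1) i - α (ℓ + 1) i' ≤ R) (ℓ : ℕ) :
    rowResidual η K r (α (ℓ + 1)) (β (ℓ + 1)) ≤ 2 * R / η / (ℓ + 1) :=
  le_div_succ_of_sq_decrease (D := fun ℓ => dualValue r c (α (ℓ + 1)) (β (ℓ + 1)))
    h.eta_pos hR h.antitone_rowResidual (h.eta_mul_rowResidual_le hR.le hosc 0)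
    (h.dualValue_sub_le hosc) h.dualValue_decrease ℓ

end Scaling

section Gibbs

variable {n d k : ℕ} {η : ℝ} {κ : Matrix (Fin n) (Fin n) ℝ} {x y : Fin n → Fin d → ℝ}
  {U : Matrix (Fin d) (Fin k) ℝ} {r c : Fin n → ℝ}

/-- The Gibbs kernel `κ_ij exp (-‖Uᵀ (x_i - y_j)‖² / η)` of the projected cost, so that `zeta` is
its scaling by the dual potentials. -/
def gibbsKernel (η : ℝ) (κ : Matrix (Fin n) (Fin n) ℝ) (x y : Fin n → Fin d → ℝ)
    (U : Matrix (Fin d) (Fin k) ℝ) : Matrix (Fin n) (Fin n) ℝ :=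
  fun i j => κ i j * Real.exp (-costCU x y U i j / η)

lemma gibbsKernel_pos (hκ : ∀ i j, 0 < κ i j) (i j : Fin n) : 0 < gibbsKernel η κ x y U i j :=
  mul_pos (hκ i j) (Real.exp_pos _)

lemma zeta_eq_scaledKernel (α β : Fin n → ℝ) :
    zeta η κ x y α β U = scaledKernel η (gibbsKernel η κ x y U) α β := by
  ext i j
  rw [zeta, phi, scaledKernel, gibbsKernel, mul_assoc, ← Real.exp_add]
  ring_nf

lemma isSinkhornSequence_gibbsKernel {α β : ℕ → Fin n → ℝ} (hη : 0 < η) (hκ : ∀ i j, 0 < κ i j)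
    (hr : inSimplex r) (hc : inSimplex c)
    (hα : ∀ (ℓ : ℕ) (i : Fin n), α (ℓ + 1) i = α ℓ i - η * Real.log (r i)
        + η * Real.log (∑ j, zeta η κ x y (α ℓ) (β ℓ) U i j))
    (hβ : ∀ (ℓ : ℕ) (j : Fin n), β (ℓ + 1) j = β ℓ j - η * Real.log (c j)
        + η * Real.log (∑ i, zeta η κ x y (α (ℓ + 1)) (β ℓ) U i j)) :
    IsSinkhornSequence η (gibbsKernel η κ x y U) r c α β where
  eta_pos := hη
  kernel_nonneg i j := (gibbsKernel_pos hκ i j).le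
  exists_pos_in_row i := ⟨i, gibbsKernel_pos hκ i i⟩
  exists_pos_in_col j := ⟨j, gibbsKernel_pos hκ j j⟩
  rowMarginal_pos := hr.2
  rowMarginal_sum := hr.1
  colMarginal_pos := hc.2
  colMarginal_sum := hc.1
  row_step ℓ := by
    ext i
    simpa only [rowUpdate, zeta_eq_scaledKernel] using hα ℓ i
  col_step ℓ := by
    ext j
    simpa only [rowUpdate, scaledKernel_transpose, zeta_eq_scaledKernel] using hβ ℓ j

lemma rowRes_piEta_eq_rowResidual {α β : Fin n → ℝ} (hκ : ∀ i j, 0 < κ i j)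
    (hmass : ∑ i, ∑ j, scaledKernel η (gibbsKernel η κ x y U) α β i j = 1) :
    rowRes r (piEta η κ x y α β U) = rowResidual η (gibbsKernel η κ x y U) r α β := by
  have hnonneg (i j : Fin n) : 0 ≤ scaledKernel η (gibbsKernel η κ x y U) α β i j :=
    scaledKernel_nonneg (fun i j => (gibbsKernel_pos hκ i j).le) i j
  simp only [rowRes, piEta, zeta_eq_scaledKernel, l1norm, abs_of_nonneg (hnonneg _ _), hmass,
    div_one, rowResidual]

end Gibbs

/-- Lemma 4.4: iteration complexity of the Sinkhorn iteration. -/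
theorem statement13 (n d k : ℕ) (hn : 1 ≤ n) (η : ℝ) (hη : 0 < η)
    (κ : Matrix (Fin n) (Fin n) ℝ) (hκ : ∀ i j, 0 < κ i j)
    (r c : Fin n → ℝ) (hr : inSimplex r) (hc : inSimplex c)
    (x y : Fin n → Fin d → ℝ) (U : Matrix (Fin d) (Fin k) ℝ)
    (α β : ℕ → Fin n → ℝ)
    (hα : ∀ (ℓ : ℕ) (i : Fin n), α (ℓ + 1) i = α ℓ i - η * Real.log (r i)
        + η * Real.log (∑ j, zeta η κ x y (α ℓ) (β ℓ) U i j))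
    (hβ : ∀ (ℓ : ℕ) (j : Fin n), β (ℓ + 1) j = β ℓ j - η * Real.log (c j)
        + η * Real.log (∑ i, zeta η κ x y (α (ℓ + 1)) (β ℓ) U i j))
    (αs βs : Fin n → ℝ)
    (hmin : ∀ α' β' : Fin n → ℝ, Lfun η κ r c x y αs βs U ≤ Lfun η κ r c x y α' β' U)
    (R : ℝ) (hR : 0 < R)
    (hvar : ∀ ℓ : ℕ, 1 ≤ ℓ → varVec (α ℓ) ≤ R) (hvars : varVec αs ≤ R) :
    (∀ ℓ : ℕ, rowRes r (piEta η κ x y (α (ℓ + 1)) (β (ℓ + 1)) U)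
        ≤ (2 * R / η) / ((ℓ : ℝ) + Real.sqrt 2 - 1))
    ∧ ∀ θ : ℝ, 0 < θ →
        ∃ ℓ : ℕ, ℓ + 1 ≤ Nat.ceil (2 * R / (η * θ) + 2 - Real.sqrt 2)
          ∧ rowRes r (piEta η κ x y (α (ℓ + 1)) (β (ℓ + 1)) U) ≤ θ := by
  have h := isSinkhornSequence_gibbsKernel hη hκ hr hc hα hβ
  have hrate := statement13_general h hR fun ℓ i i' =>
    (sub_le_varVec (α (ℓ + 1)) i i').trans (hvar (ℓ + 1) (Nat.le_add_left 1 ℓ))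
  simp only [rowRes_piEta_eq_rowResidual hκ (h.mass_succ _), ← div_div]
  exact rate_and_complexity_of_le_div_succ (by positivity) hrate

end PRWPaper
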